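/- Let α ∈ (0,2], 0 < β < min(d, α), and let G_α(t,x,y) be the heat kernel on ℝ^d with Fourier transform F[G_α(t,x,·)](ξ) = e^{i⟨x,ξ⟩ − t|ξ|^α/2}. Then for all x ∈ ℝ^d and 0 ≤ s ≤ t, c_{d,β} ∫₀^s ∫_{ℝ^d} |ξ|^{−(d−β)} e^{−(t−u)|ξ|^α/2} e^{−(s−u)|ξ|^α/2} dξ du = c_{d,β,α} ((t+s)^{1−β/α} − (t−s)^{1−β/α}), where c_{d,β,α} = c_{d,β} ∫_{ℝ^d} |ξ|^{−(d−β)−α}(1 − e^{−|ξ|^α/2}) dξ. -/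

import Mathlib

open Real MeasureTheory

/-!
The two heat factors combine into `exp (-b ‖ξ‖ ^ α / 2)` with `b = t + s - 2 * u`, so the covariance
is half the integral of `I b = ∫ ‖ξ‖ ^ (-(d - β)) exp (-b ‖ξ‖ ^ α / 2) dξ` over `[t - s, t + s]`.
The dilation `ξ ↦ b ^ (1 / α) ξ` shows that `I b = b ^ (-β / α) I 1`, which gives the power law with
constant `I 1 / (2 (1 - β / α))`. This is also the value of the integral defining `c_{d,β,α}`
(up to `c_{d,β}`), by integrating `I` over `[0, 1]` in the other order:
`∫₀¹ exp (-b x / 2) db = 2 (1 - exp (-x / 2)) / x`.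
-/

section RieszHeat

open Module (finrank)

variable {E : Type*} [NormedAddCommGroup E] [NormedSpace ℝ E]

/-- The Fourier-side density, at frequency `ξ`, of the Riesz kernel `|x| ^ (-β)` (up to `c_{d,β}`)
damped by the fractional heat semigroup of order `α` over total time `b`. In the covariance at times
`s` and `t` of noise emitted at time `u`, the total time is `b = (t - u) + (s - u)`. -/
noncomputable def rieszHeatDensity (α β b : ℝ) (ξ : E) : ℝ :=
  ‖ξ‖ ^ (-((finrank ℝ E : ℝ) - β)) * Real.exp (-b * ‖ξ‖ ^ α / 2)

lemma rieszHeatDensity_nonneg (α β b : ℝ) (ξ : E) : 0 ≤ rieszHeatDensity α β b ξ := by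
  unfold rieszHeatDensity
  positivity

lemma rieszHeatDensity_add (α β a b : ℝ) (ξ : E) :
    rieszHeatDensity α β (a + b) ξ =
      ‖ξ‖ ^ (-((finrank ℝ E : ℝ) - β)) * Real.exp (-a * ‖ξ‖ ^ α / 2) *
        Real.exp (-b * ‖ξ‖ ^ α / 2) := by
  rw [rieszHeatDensity, mul_assoc, ← Real.exp_add]
  ring_nf

lemma rieszHeatDensity_smul {α b : ℝ} (hα : α ≠ 0) (hb : 0 ≤ b) (β : ℝ) (ξ : E) :
    rieszHeatDensity α β 1 (b ^ α⁻¹ • ξ) =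
      (b ^ α⁻¹) ^ (-((finrank ℝ E : ℝ) - β)) * rieszHeatDensity α β b ξ := by
  have hr : 0 ≤ b ^ α⁻¹ := rpow_nonneg hb _
  rw [rieszHeatDensity, rieszHeatDensity, norm_smul, Real.norm_of_nonneg hr,
    mul_rpow hr (norm_nonneg ξ), mul_rpow hr (norm_nonneg ξ), rpow_inv_rpow hb hα]
  ring_nf

lemma intervalIntegral_exp_neg_mul_div_two {x : ℝ} (hx : x ≠ 0) (a b : ℝ) :
    ∫ r in a..b, Real.exp (-r * x / 2) =
      2 * (x⁻¹ * (Real.exp (-a * x / 2) - Real.exp (-b * x / 2))) := by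
  have hx' : -x / 2 ≠ 0 := by simpa using hx
  have hcomm (r : ℝ) : -r * x / 2 = -x / 2 * r := by ring
  simp_rw [hcomm]
  rw [intervalIntegral.integral_comp_mul_left Real.exp hx', integral_exp, smul_eq_mul]
  field_simp
  ring

lemma intervalIntegral_rieszHeatDensity (α β a b : ℝ) {ξ : E} (hξ : ξ ≠ 0) :
    ∫ r in a..b, rieszHeatDensity α β r ξ =
      2 * (‖ξ‖ ^ (-((finrank ℝ E : ℝ) - β) - α) *
        (Real.exp (-a * ‖ξ‖ ^ α / 2) - Real.exp (-b * ‖ξ‖ ^ α / 2))) := by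
  have hξ' : 0 < ‖ξ‖ := norm_pos_iff.mpr hξ
  simp only [rieszHeatDensity]
  rw [intervalIntegral.integral_const_mul,
    intervalIntegral_exp_neg_mul_div_two (rpow_pos_of_pos hξ' α).ne', rpow_sub hξ']
  ring

variable [MeasurableSpace E] [BorelSpace E]

lemma measurable_uncurry_rieszHeatDensity (α β : ℝ) :
    Measurable (Function.uncurry (rieszHeatDensity (E := E) α β)) := by
  unfold rieszHeatDensity Function.uncurry
  fun_prop

variable [FiniteDimensional ℝ E] (μ : Measure E) [μ.IsAddHaarMeasure]

lemma integral_rieszHeatDensity {α b : ℝ} (hα : α ≠ 0) (hb : 0 < b) (β : ℝ) :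
    ∫ ξ, rieszHeatDensity α β b ξ ∂μ = b ^ (-(β / α)) * ∫ ξ, rieszHeatDensity α β 1 ξ ∂μ := by
  set r := b ^ α⁻¹ with hr_def
  have hr : 0 < r := rpow_pos_of_pos hb _
  have hrβ : r ^ (-β) = b ^ (-(β / α)) := by
    rw [hr_def, ← rpow_mul hb.le]
    ring_nf
  have hdilate : r ^ (-((finrank ℝ E : ℝ) - β)) * ∫ ξ, rieszHeatDensity α β b ξ ∂μ =
      r ^ (-(finrank ℝ E : ℝ)) * ∫ ξ, rieszHeatDensity α β 1 ξ ∂μ := by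
    rw [← integral_const_mul]
    simp_rw [hr_def, ← rieszHeatDensity_smul hα hb.le, ← hr_def]
    rw [Measure.integral_comp_smul_of_nonneg μ _ r (hR := hr.le), smul_eq_mul, rpow_neg hr.le,
      rpow_natCast]
  rw [← hrβ, show -β = -(finrank ℝ E : ℝ) - -((finrank ℝ E : ℝ) - β) by ring, rpow_sub hr,
    div_mul_eq_mul_div, ← hdilate, mul_div_cancel_left₀ _ (rpow_pos_of_pos hr _).ne']

lemma intervalIntegral_integral_rieszHeatDensity {α β a b : ℝ} (hα : 0 < α) (hβα : β < α)
    (ha : 0 ≤ a) (hab : a ≤ b) :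
    ∫ r in a..b, ∫ ξ, rieszHeatDensity α β r ξ ∂μ =
      (b ^ (1 - β / α) - a ^ (1 - β / α)) / (1 - β / α) * ∫ ξ, rieszHeatDensity α β 1 ξ ∂μ := by
  have hβα' : β / α < 1 := (div_lt_one hα).2 hβα
  rw [intervalIntegral.integral_congr_Ioo_of_le hab fun r hr ↦
      integral_rieszHeatDensity μ hα.ne' (ha.trans_lt hr.1) β,
    intervalIntegral.integral_mul_const, integral_rpow (Or.inl (by linarith)),
    neg_add_eq_sub]

variable [Nontrivial E]

lemma integrable_rieszHeatDensity {α β b : ℝ} (hα : 0 < α) (hβ : 0 < β) (hb : 0 < b) :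
    Integrable (rieszHeatDensity α β b) μ := by
  have hradial : IntegrableOn (fun y : ℝ ↦ y ^ (β - 1) * Real.exp (-(b / 2) * y ^ α))
      (Set.Ioi 0) :=
    integrableOn_rpow_mul_exp_neg_mul_rpow (by linarith) hα (by positivity)
  refine (integrable_fun_norm_addHaar μ (f := fun y : ℝ ↦
    y ^ (-((finrank ℝ E : ℝ) - β)) * Real.exp (-b * y ^ α / 2))).mpr ?_
  refine hradial.congr_fun (fun y (hy : 0 < y) ↦ ?_) measurableSet_Ioi
  have hexponent : β - 1 = ((finrank ℝ E - 1 : ℕ) : ℝ) + -((finrank ℝ E : ℝ) - β) := by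
    rw [Nat.cast_sub Module.finrank_pos, Nat.cast_one]
    ring
  dsimp only
  rw [hexponent, rpow_add hy, rpow_natCast, smul_eq_mul]
  ring_nf

lemma integrable_uncurry_rieszHeatDensity {α β a b : ℝ} (hα : 0 < α) (hβ : 0 < β)
    (hβα : β < α) (ha : 0 ≤ a) (hab : a ≤ b) :
    Integrable (Function.uncurry (rieszHeatDensity α β))
      ((volume.restrict (Set.uIoc a b)).prod μ) := by
  rw [Set.uIoc_of_le hab]
  refine (integrable_prod_iff
    (measurable_uncurry_rieszHeatDensity α β).aestronglyMeasurable).mpr ⟨?_, ?_⟩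
  · filter_upwards [ae_restrict_mem measurableSet_Ioc] with r hr
    exact integrable_rieszHeatDensity μ hα hβ (ha.trans_lt hr.1)
  · have hpow : IntegrableOn (fun r : ℝ ↦ r ^ (-(β / α)) * ∫ ξ, rieszHeatDensity α β 1 ξ ∂μ)
        (Set.Ioc a b) := by
      have hβα' : β / α < 1 := (div_lt_one hα).2 hβα
      exact ((intervalIntegrable_iff_integrableOn_Ioc_of_le hab).mp
        (intervalIntegral.intervalIntegrable_rpow' (by linarith))).mul_const _
    refine hpow.congr_fun (fun r hr ↦ ?_) measurableSet_Ioc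
    simp only [Function.uncurry_apply_pair, Real.norm_of_nonneg (rieszHeatDensity_nonneg _ _ _ _)]
    exact (integral_rieszHeatDensity μ hα.ne' (ha.trans_lt hr.1) β).symm

lemma integral_norm_rpow_mul_one_sub_exp {α β : ℝ} (hα : 0 < α) (hβ : 0 < β) (hβα : β < α) :
    ∫ ξ : E, ‖ξ‖ ^ (-((finrank ℝ E : ℝ) - β) - α) * (1 - Real.exp (-‖ξ‖ ^ α / 2)) ∂μ =
      (∫ ξ : E, rieszHeatDensity α β 1 ξ ∂μ) / (1 - β / α) / 2 := by
  have hγ : 1 - β / α ≠ 0 := (sub_pos.2 ((div_lt_one hα).2 hβα)).ne'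
  have hinner : ∀ᵐ ξ : E ∂μ, ∫ r in (0 : ℝ)..1, rieszHeatDensity α β r ξ =
      2 * (‖ξ‖ ^ (-((finrank ℝ E : ℝ) - β) - α) * (1 - Real.exp (-‖ξ‖ ^ α / 2))) := by
    filter_upwards [μ.ae_ne 0] with ξ hξ
    simpa only [neg_zero, zero_mul, zero_div, Real.exp_zero, neg_one_mul] using
      intervalIntegral_rieszHeatDensity α β 0 1 hξ
  have hswap := intervalIntegral_integral_swap
    (integrable_uncurry_rieszHeatDensity μ hα hβ hβα le_rfl zero_le_one)
  rw [intervalIntegral_integral_rieszHeatDensity μ hα hβα le_rfl zero_le_one, one_rpow,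
    zero_rpow hγ, sub_zero, integral_congr_ae hinner, integral_const_mul] at hswap
  linear_combination -(1 / 2) * hswap

theorem stmt_7_general {α β s t : ℝ} (hα : 0 < α) (hβ : 0 < β) (hβα : β < α)
    (hs : 0 ≤ s) (hst : s ≤ t) :
    (∫ u in (0 : ℝ)..s, ∫ ξ : E,
        ‖ξ‖ ^ (-((finrank ℝ E : ℝ) - β)) * Real.exp (-(t - u) * ‖ξ‖ ^ α / 2)
          * Real.exp (-(s - u) * ‖ξ‖ ^ α / 2) ∂μ) =
      (∫ ξ : E, ‖ξ‖ ^ (-((finrank ℝ E : ℝ) - β) - α) * (1 - Real.exp (-‖ξ‖ ^ α / 2)) ∂μ)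
        * ((t + s) ^ (1 - β / α) - (t - s) ^ (1 - β / α)) := by
  have htime (u : ℝ) : (t - u) + (s - u) = (t + s) - 2 * u := by ring
  simp_rw [← rieszHeatDensity_add, htime]
  rw [intervalIntegral.integral_comp_sub_mul (fun b ↦ ∫ ξ : E, rieszHeatDensity α β b ξ ∂μ)
      two_ne_zero (t + s), show t + s - 2 * s = t - s by ring, mul_zero, sub_zero,
    intervalIntegral_integral_rieszHeatDensity μ hα hβα (by linarith) (by linarith),
    integral_norm_rpow_mul_one_sub_exp μ hα hβ hβα, smul_eq_mul]
  ring

end RieszHeat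

/-- Time covariance of the fractional stochastic heat equation with Riesz-kernel noise:
for `0 < β < min(d,α)`, `0 ≤ s ≤ t` and any constant `c = c_{d,β} > 0`,
`c ∫₀^s ∫_{ℝ^d} |ξ|^{−(d−β)} e^{−(t−u)|ξ|^α/2} e^{−(s−u)|ξ|^α/2} dξ du
  = c_{d,β,α} ((t+s)^{1−β/α} − (t−s)^{1−β/α})`,
where `c_{d,β,α} = c ∫_{ℝ^d} |ξ|^{−(d−β)−α}(1 − e^{−|ξ|^α/2}) dξ`. -/
theorem stmt_7 (d : ℕ) (hd : 1 ≤ d) (α β : ℝ) (hα0 : 0 < α) (hα2 : α ≤ 2)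
    (hβ0 : 0 < β) (hβd : β < d) (hβα : β < α) (c : ℝ) (hc : 0 < c)
    (s t : ℝ) (hs : 0 ≤ s) (hst : s ≤ t) :
    c * (∫ u in (0:ℝ)..s, ∫ ξ : EuclideanSpace ℝ (Fin d),
        ‖ξ‖ ^ (-((d:ℝ) - β)) * Real.exp (-(t - u) * ‖ξ‖ ^ α / 2)
          * Real.exp (-(s - u) * ‖ξ‖ ^ α / 2)) =
      (c * ∫ ξ : EuclideanSpace ℝ (Fin d),
          ‖ξ‖ ^ (-((d:ℝ) - β) - α) * (1 - Real.exp (-‖ξ‖ ^ α / 2)))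
        * ((t + s) ^ (1 - β / α) - (t - s) ^ (1 - β / α)) := by
  have : Nonempty (Fin d) := ⟨⟨0, hd⟩⟩
  have hcov := stmt_7_general (volume : Measure (EuclideanSpace ℝ (Fin d))) hα0 hβ0 hβα hs hst
  rw [finrank_euclideanSpace_fin] at hcov
  rw [hcov, mul_assoc]
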